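/- arXiv:2310.15462 — 3 statements merged into one kernel-verified Lean document; each statement's English description precedes it below -/
import Mathlib

section
/- Under Assumption 2.1, for every k ≥ 1 and all f, g ∈ L²(μ^k), one has (n/a_n)^k ∫_{E^k} f̃(u) g̃(u) dP_n^k(u) → ⟨f̃, g̃⟩_{L²(μ^k)} = ∫_{E^k} f̃ g̃ dμ^k as n → ∞, where f̃ and g̃ are the symmetrizations of f and g. (The product f̃ g̃ belongs to L¹(μ^k) by the Cauchy–Schwarz inequality.) -/
open MeasureTheory Filter Topology
open scoped ENNReal NNReal

/-- **Assumption 2.1** of the paper, for data `(μ, a, P)`. -/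
def Assumption21 {E : Type*} [MeasurableSpace E] (μ : Measure E) (a : ℕ → ℝ)
    (P : ℕ → Measure E) : Prop :=
  μ Set.univ = ∞ ∧
  (∀ n : ℕ, 1 ≤ n → 0 < a n) ∧
  Tendsto a atTop atTop ∧
  Tendsto (fun n : ℕ => a n / n) atTop (𝓝 0) ∧
  (∀ B : Set E, MeasurableSet B → ∀ n : ℕ, 1 ≤ n →
    ENNReal.ofReal ((n : ℝ) / a n) * P n B ≤ ENNReal.ofReal (((n : ℝ) + 1) / a (n + 1)) * P (n + 1) B) ∧
  (∀ B : Set E, MeasurableSet B →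
    Tendsto (fun n : ℕ => ENNReal.ofReal ((n : ℝ) / a n) * P n B) atTop (𝓝 (μ B)))

/-- The symmetrization `f̃` of a function of `k` variables. -/
noncomputable def symmetrize {E : Type*} (k : ℕ) (f : (Fin k → E) → ℝ) :
    (Fin k → E) → ℝ :=
  fun u => (k.factorial : ℝ)⁻¹ * ∑ σ : Equiv.Perm (Fin k), f (u ∘ σ)

/-!
Along an increasing family of measures, the supremum is computed setwise. The product measures
`νₙᵏ` of an increasing family `νₙ ↑ μ` therefore increase to a measure which agrees with `μᵏ` on
boxes, hence equals `μᵏ`. Integrals of `μᵏ`-integrable functions then converge by splitting into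
positive and negative parts. With `νₙ = (n / aₙ) Pₙ` this is applied to `f̃ g̃`, which is
`μᵏ`-integrable because permuting coordinates preserves `μᵏ`.
-/

section IncreasingMeasures

variable {α κ : Type*} [MeasurableSpace α] [Preorder κ] [IsDirectedOrder κ] {ρ : κ → Measure α}

lemma iSup_measure_apply_of_monotone (hρ : Monotone ρ) {s : Set α} (hs : MeasurableSet s) :
    (⨆ n, ρ n) s = ⨆ n, ρ n s := by
  have additive ⦃t : ℕ → Set α⦄ (ht : ∀ i, MeasurableSet (t i))
      (hdisj : Pairwise (Function.onFun Disjoint t)) :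
      ⨆ n, ρ n (⋃ i, t i) = ∑' i, ⨆ n, ρ n (t i) := by
    simp_rw [measure_iUnion hdisj ht, ENNReal.tsum_eq_iSup_sum]
    rw [iSup_comm]
    exact iSup_congr fun F =>
      (ENNReal.finsetSum_iSup_of_monotone fun i _ _ hmn => hρ hmn (t i)).symm
  let setwiseSup : Measure α :=
    Measure.ofMeasurable (fun t _ => ⨆ n, ρ n t) (by simp) additive
  have setwiseSup_apply {t : Set α} (ht : MeasurableSet t) : setwiseSup t = ⨆ n, ρ n t :=
    Measure.ofMeasurable_apply t ht
  refine le_antisymm ?_ (iSup_le fun n => le_iSup ρ n s)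
  have iSup_le_setwiseSup : ⨆ n, ρ n ≤ setwiseSup := iSup_le fun n =>
    Measure.le_iff.2 fun t ht => (le_iSup (fun m => ρ m t) n).trans_eq (setwiseSup_apply ht).symm
  exact (iSup_le_setwiseSup s).trans_eq (setwiseSup_apply hs)

lemma lintegral_iSup_measure_of_monotone (hρ : Monotone ρ) (f : α → ℝ≥0∞) :
    ∫⁻ x, f x ∂(⨆ n, ρ n) = ⨆ n, ∫⁻ x, f x ∂ρ n := by
  have simple (φ : SimpleFunc α ℝ≥0∞) : φ.lintegral (⨆ n, ρ n) = ⨆ n, φ.lintegral (ρ n) := by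
    simp_rw [SimpleFunc.lintegral, iSup_measure_apply_of_monotone hρ (φ.measurableSet_fiber _),
      ENNReal.mul_iSup]
    exact ENNReal.finsetSum_iSup_of_monotone fun x m n hmn => mul_le_mul_right (hρ hmn _) x
  simp_rw [lintegral, simple, iSup_comm (ι' := κ)]

lemma tendsto_lintegral_iSup_measure (hρ : Monotone ρ) (f : α → ℝ≥0∞) :
    Tendsto (fun n => ∫⁻ x, f x ∂ρ n) atTop (𝓝 (∫⁻ x, f x ∂(⨆ n, ρ n))) := by
  rw [lintegral_iSup_measure_of_monotone hρ]
  exact tendsto_atTop_iSup fun m n hmn => lintegral_mono' (hρ hmn) le_rfl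

lemma tendsto_integral_iSup_measure (hρ : Monotone ρ) {h : α → ℝ}
    (hh : Integrable h (⨆ n, ρ n)) :
    Tendsto (fun n => ∫ x, h x ∂ρ n) atTop (𝓝 (∫ x, h x ∂(⨆ n, ρ n))) := by
  have tendsto_part {u : α → ℝ} (hu : Integrable u (⨆ n, ρ n)) :
      Tendsto (fun n => (∫⁻ x, ENNReal.ofReal (u x) ∂ρ n).toReal) atTop
        (𝓝 (∫⁻ x, ENNReal.ofReal (u x) ∂(⨆ n, ρ n)).toReal) :=
    (ENNReal.tendsto_toReal hu.lintegral_lt_top.ne).comp (tendsto_lintegral_iSup_measure hρ _)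
  rw [integral_eq_lintegral_pos_part_sub_lintegral_neg_part hh]
  refine ((tendsto_part hh).sub (tendsto_part hh.neg)).congr fun n => ?_
  exact (integral_eq_lintegral_pos_part_sub_lintegral_neg_part
    (hh.mono_measure (le_iSup ρ n))).symm

lemma iSup_measure_eq_of_tendsto [Nonempty κ] {μ : Measure α} (hρ : Monotone ρ)
    (hlim : ∀ s, MeasurableSet s → Tendsto (fun n => ρ n s) atTop (𝓝 (μ s))) :
    ⨆ n, ρ n = μ :=
  Measure.ext fun s hs => (iSup_measure_apply_of_monotone hρ hs).trans <|
    tendsto_nhds_unique (tendsto_atTop_iSup fun _ _ hmn => hρ hmn s) (hlim s hs)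

end IncreasingMeasures

lemma ennreal_finsetProd_iSup_of_monotone {ι κ : Type*} [Preorder κ] [IsDirectedOrder κ]
    [Nonempty κ] {s : Finset ι} {f : ι → κ → ℝ≥0∞} (hf : ∀ i, Monotone (f i)) :
    ∏ i ∈ s, ⨆ n, f i n = ⨆ n, ∏ i ∈ s, f i n := by
  induction s using Finset.cons_induction with
  | empty => simp
  | cons i s _ ih =>
    simp_rw [Finset.prod_cons, ih, ENNReal.iSup_mul, ENNReal.mul_iSup]
    refine le_antisymm (iSup₂_le fun m n => ?_) (iSup_le fun n => le_iSup₂_of_le n n le_rfl)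
    obtain ⟨l, hml, hnl⟩ := exists_ge_ge m n
    refine le_iSup_of_le l ?_
    gcongr with j
    · exact hf i hml
    · exact hf j hnl

section ProductMeasures

variable {ι κ : Type*} [Fintype ι] {α : ι → Type*} [∀ i, MeasurableSpace (α i)]

lemma measure_pi_mono {ν μ : ∀ i, Measure (α i)} (hνμ : ν ≤ μ) :
    Measure.pi ν ≤ Measure.pi μ := by
  have outer_pi_le : (OuterMeasure.pi fun i => (ν i).toOuterMeasure) ≤
      OuterMeasure.pi fun i => (μ i).toOuterMeasure :=
    OuterMeasure.le_pi.2 fun s _ => (OuterMeasure.pi_pi_le _ s).trans <|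
      Finset.prod_le_prod' fun i _ => hνμ i (s i)
  rw [Measure.pi_def ν, Measure.pi_def μ]
  refine Measure.le_iff.2 fun s hs => ?_
  rw [toMeasure_apply _ _ hs, toMeasure_apply _ _ hs]
  exact outer_pi_le s

lemma measure_pi_iSup_of_monotone [Preorder κ] [IsDirectedOrder κ] [Nonempty κ]
    {ν : κ → ∀ i, Measure (α i)} [∀ i, SigmaFinite (⨆ n, ν n i)] (hν : Monotone ν) :
    Measure.pi (fun i => ⨆ n, ν n i) = ⨆ n, Measure.pi (ν n) := by
  have (n : κ) (i : ι) : SigmaFinite (ν n i) :=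
    Measure.sigmaFinite_of_le _ (le_iSup (fun n => ν n i) n)
  have pi_monotone : Monotone fun n => Measure.pi (ν n) := fun m n hmn => measure_pi_mono (hν hmn)
  refine Measure.pi_eq fun s hs => ?_
  calc (⨆ n, Measure.pi (ν n)) (Set.univ.pi s)
      = ⨆ n, ∏ i, ν n i (s i) := by
        simp_rw [iSup_measure_apply_of_monotone pi_monotone (.univ_pi hs), Measure.pi_pi]
    _ = ∏ i, ⨆ n, ν n i (s i) :=
        (ennreal_finsetProd_iSup_of_monotone fun i m n hmn => hν hmn i (s i)).symm
    _ = ∏ i, (⨆ n, ν n i) (s i) := Finset.prod_congr rfl fun i _ =>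
        (iSup_measure_apply_of_monotone (fun m n hmn => hν hmn i) (hs i)).symm

lemma measure_pi_smul (c : ι → ℝ≥0) (μ : ∀ i, Measure (α i)) [∀ i, SigmaFinite (μ i)] :
    Measure.pi (fun i => c i • μ i) = (∏ i, c i) • Measure.pi μ := by
  refine Measure.pi_eq fun s _ => ?_
  simp only [Measure.smul_apply, Measure.pi_pi, ENNReal.smul_def, smul_eq_mul,
    ENNReal.ofNNReal_finsetProd, Finset.prod_mul_distrib]

variable {E : Type*} [MeasurableSpace E]

lemma tendsto_integral_pi_of_monotone [Preorder κ] [IsDirectedOrder κ] [Nonempty κ]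
    {ν : κ → Measure E} {μ : Measure E} [SigmaFinite μ] (hν : Monotone ν)
    (hlim : ∀ s, MeasurableSet s → Tendsto (fun n => ν n s) atTop (𝓝 (μ s)))
    {h : (ι → E) → ℝ} (hh : Integrable h (Measure.pi fun _ => μ)) :
    Tendsto (fun n => ∫ u, h u ∂(Measure.pi fun _ => ν n)) atTop
      (𝓝 (∫ u, h u ∂(Measure.pi fun _ => μ))) := by
  obtain rfl := iSup_measure_eq_of_tendsto hν hlim
  have diagonal_monotone : Monotone fun n (_ : ι) => ν n := fun _ _ hmn _ => hν hmn
  rw [measure_pi_iSup_of_monotone diagonal_monotone] at hh ⊢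
  exact tendsto_integral_iSup_measure (fun _ _ hmn => measure_pi_mono (diagonal_monotone hmn)) hh

lemma measurePreserving_comp_equiv {ι' : Type*} [Fintype ι'] (e : ι ≃ ι')
    (μ : ι' → Measure E) [∀ i, SigmaFinite (μ i)] :
    MeasurePreserving (fun u : ι' → E => u ∘ e) (Measure.pi μ) (Measure.pi (μ ∘ e)) :=
  (measurePreserving_piCongrLeft μ e).symm

end ProductMeasures

section Symmetrization

variable {E : Type*} [MeasurableSpace E] {μ : Measure E} [SigmaFinite μ] {k : ℕ}

lemma memLp_symmetrize {p : ℝ≥0∞} {f : (Fin k → E) → ℝ}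
    (hf : MemLp f p (Measure.pi fun _ => μ)) :
    MemLp (symmetrize k f) p (Measure.pi fun _ => μ) :=
  (memLp_finsetSum Finset.univ fun σ _ =>
    hf.comp_measurePreserving (measurePreserving_comp_equiv σ fun _ => μ)).const_mul _

theorem integral_symmetrize_mul_tendsto_general {κ : Type*} [Preorder κ] [IsDirectedOrder κ]
    [Nonempty κ] {c : κ → ℝ≥0} {P : κ → Measure E} [∀ n, SigmaFinite (P n)]
    (hmono : Monotone fun n => c n • P n)
    (hlim : ∀ B, MeasurableSet B → Tendsto (fun n => (c n • P n) B) atTop (𝓝 (μ B)))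
    {f g : (Fin k → E) → ℝ} (hf : MemLp f 2 (Measure.pi fun _ => μ))
    (hg : MemLp g 2 (Measure.pi fun _ => μ)) :
    Tendsto (fun n => (c n : ℝ) ^ k *
        ∫ u, symmetrize k f u * symmetrize k g u ∂(Measure.pi fun _ => P n)) atTop
      (𝓝 (∫ u, symmetrize k f u * symmetrize k g u ∂(Measure.pi fun _ => μ))) := by
  have integrable_mul : Integrable (fun u => symmetrize k f u * symmetrize k g u)
      (Measure.pi fun _ => μ) :=
    (memLp_symmetrize hf).integrable_mul (memLp_symmetrize hg)
  refine (tendsto_integral_pi_of_monotone hmono hlim integrable_mul).congr fun n => ?_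
  rw [measure_pi_smul, integral_smul_nnreal_measure, Fin.prod_const, NNReal.smul_def,
    NNReal.coe_pow, smul_eq_mul]

end Symmetrization

namespace Assumption21

variable {E : Type*} [MeasurableSpace E] {μ : Measure E} {a : ℕ → ℝ} {P : ℕ → Measure E}

lemma natCast_div_nonneg (h21 : Assumption21 μ a P) (n : ℕ) : 0 ≤ (n : ℝ) / a n := by
  obtain ⟨-, ha, -⟩ := h21
  rcases n.eq_zero_or_pos with rfl | hn
  · simp
  · exact div_nonneg n.cast_nonneg (ha n hn).le

lemma monotone_smul (h21 : Assumption21 μ a P) :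
    Monotone fun n : ℕ => ((n : ℝ) / a n).toNNReal • P n := by
  obtain ⟨-, -, -, -, hmono, -⟩ := h21
  refine monotone_nat_of_le_succ fun n => Measure.le_iff.2 fun B hB => ?_
  rcases n.eq_zero_or_pos with rfl | hn
  · simp
  · simpa [ENNReal.ofReal] using hmono B hB n hn

lemma tendsto_smul_apply (h21 : Assumption21 μ a P) {B : Set E} (hB : MeasurableSet B) :
    Tendsto (fun n : ℕ => (((n : ℝ) / a n).toNNReal • P n) B) atTop (𝓝 (μ B)) := by
  obtain ⟨-, -, -, -, -, hlim⟩ := h21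
  exact hlim B hB

end Assumption21

/-- Under Assumption 2.1, for `k ≥ 1` and `f, g ∈ L²(μ^k)`,
`(n/a_n)^k ∫ f̃ g̃ dP_n^k → ∫ f̃ g̃ dμ^k`. -/
theorem integral_symmetrize_mul_tendsto
    {E : Type*} [MeasurableSpace E] (μ : Measure E) [SigmaFinite μ] [NullSingletonClass μ]
    (a : ℕ → ℝ) (P : ℕ → Measure E) [∀ n, IsProbabilityMeasure (P n)]
    (h21 : Assumption21 μ a P)
    (k : ℕ) (hk : 1 ≤ k) (f g : (Fin k → E) → ℝ)
    (hf : MemLp f 2 (Measure.pi fun _ : Fin k => μ))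
    (hg : MemLp g 2 (Measure.pi fun _ : Fin k => μ)) :
    Tendsto (fun n : ℕ =>
        ((n : ℝ) / a n) ^ k *
          ∫ u, symmetrize k f u * symmetrize k g u ∂(Measure.pi fun _ : Fin k => P n))
      atTop
      (𝓝 (∫ u, symmetrize k f u * symmetrize k g u ∂(Measure.pi fun _ : Fin k => μ))) := by
  have scale_eq (n : ℕ) : (((n : ℝ) / a n).toNNReal : ℝ) = n / a n :=
    Real.coe_toNNReal _ (h21.natCast_div_nonneg n)
  simpa only [scale_eq] using integral_symmetrize_mul_tendsto_general h21.monotone_smul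
    (fun B hB => h21.tendsto_smul_apply hB) hf hg
end

section
/- Under Assumption 2.1, let k_1, k_2 ≥ 1, 0 ≤ l ≤ min(k_1, k_2), f ∈ L²(μ^{k_1}) and g ∈ L²(μ^{k_2}). Then for every n ≥ 1, |F_l^{(n)}(f,g)| ≤ ‖f‖_{L²(μ^{k_1})} · ‖g‖_{L²(μ^{k_2})}. -/
open MeasureTheory Filter Topology
open scoped ENNReal NNReal

/-- Substitution of variables according to a diagram `(j1, j2)`. -/
noncomputable def subst {E : Type*} {k1 k2 l : ℕ} (j1 : Fin l ↪ Fin k1) (j2 : Fin l ↪ Fin k2)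
    (x : Fin k1 → E) (z : Fin k2 → E) : Fin k2 → E :=
  fun i => if h : ∃ s, j2 s = i then x (j1 (Classical.choose h)) else z i

/-- The bilinear form `F_l^{(n)}(f, g)`: `c^{(k1+k2)/2}` (with `c = n / a n`) times the
average, over all diagrams with `l` edges (parametrized by pairs of injections, each
diagram being counted `l!` times), of `∫ (f ⊗ g)_{B(𝒩)} dP^{k1+k2-l}`; the integral of the
identified function is realized on `E^{k1} × E^{k2}` with the `l` matched coordinates of
the second factor as dummy variables under the probability measure `P`. -/
noncomputable def Fln {E : Type*} [MeasurableSpace E] (P : Measure E) (c : ℝ)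
    (k1 k2 l : ℕ) (f : (Fin k1 → E) → ℝ) (g : (Fin k2 → E) → ℝ) : ℝ :=
  Real.sqrt c ^ (k1 + k2) *
    (((Fintype.card (Fin l ↪ Fin k1) * Fintype.card (Fin l ↪ Fin k2) : ℕ) : ℝ))⁻¹ *
    ∑ j1 : Fin l ↪ Fin k1, ∑ j2 : Fin l ↪ Fin k2,
      ∫ q : (Fin k1 → E) × (Fin k2 → E), f q.1 * g (subst j1 j2 q.1 q.2)
        ∂((Measure.pi fun _ : Fin k1 => P).prod (Measure.pi fun _ : Fin k2 => P))

/-!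
A map that merely selects distinct coordinates pushes a product of probability measures forward
to a product of probability measures. Hence both `q ↦ q.1` and the substitution attached to a
diagram are measure preserving, and the Cauchy-Schwarz inequality bounds each diagram integral by
`‖f‖_{L²(P^k1)} ‖g‖_{L²(P^k2)}`, uniformly over the diagrams being averaged. The normalisation
`c^{(k1+k2)/2}` splits as `c^{k1/2} c^{k2/2}`, and each factor is absorbed by
`c^k • P^k ≤ μ^k`, which follows from `c • P ≤ μ`.
-/

section ProductMeasure

variable {ι : Type*} [Fintype ι]

theorem prod_smul_pi_le_pi {α : ι → Type*} [∀ i, MeasurableSpace (α i)]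
    {μ ν : ∀ i, Measure (α i)} [∀ i, SigmaFinite (ν i)] {c : ι → ℝ≥0∞}
    (h : ∀ i, c i • ν i ≤ μ i) :
    (∏ i, c i) • Measure.pi ν ≤ Measure.pi μ := by
  have outer_le : ((∏ i, c i) • Measure.pi ν).toOuterMeasure ≤
      OuterMeasure.pi fun i => (μ i).toOuterMeasure := by
    refine OuterMeasure.le_pi.2 fun t _ => ?_
    calc ((∏ i, c i) • Measure.pi ν) (Set.univ.pi t)
        = ∏ i, (c i • ν i) (t i) := by
          simp [Measure.pi_pi, Finset.prod_mul_distrib]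
      _ ≤ ∏ i, μ i (t i) := Finset.prod_le_prod' fun i _ => h i (t i)
  refine Measure.le_iff.2 fun s _ => (outer_le s).trans ?_
  rw [Measure.pi]
  exact le_toMeasure_apply _ _ s

theorem measurePreserving_pi_comp_injective {κ : Type*} [Fintype κ] {α : κ → Type*}
    [∀ j, MeasurableSpace (α j)] (μ : ∀ j, Measure (α j)) [∀ j, IsProbabilityMeasure (μ j)]
    {r : ι → κ} (hr : r.Injective) :
    MeasurePreserving (fun (x : ∀ j, α j) i => x (r i)) (Measure.pi μ)
      (Measure.pi fun i => μ (r i)) := by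
  refine ⟨by fun_prop, ?_⟩
  have indep : ProbabilityTheory.iIndepFun (fun i (x : ∀ j, α j) => x (r i)) (Measure.pi μ) :=
    (ProbabilityTheory.iIndepFun_pi (X := fun j (y : α j) => y) fun _ => aemeasurable_id).precomp hr
  rw [indep.map_fun_eq_pi_map fun i => (measurable_pi_apply (r i)).aemeasurable]
  exact congrArg Measure.pi (funext fun i => (measurePreserving_eval μ (r i)).map_eq)

end ProductMeasure

section Substitution

variable {τ ι κ : Type*} {j₁ : τ → ι} {j₂ : τ → κ}

theorem injective_extend_inl_inr (hj₁ : j₁.Injective) (hj₂ : j₂.Injective) :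
    (Function.extend j₂ (Sum.inl ∘ j₁) (Sum.inr : κ → ι ⊕ κ)).Injective := by
  intro i i' h
  by_cases hi : ∃ s, j₂ s = i <;> by_cases hi' : ∃ s, j₂ s = i'
  · obtain ⟨s, rfl⟩ := hi
    obtain ⟨s', rfl⟩ := hi'
    rw [hj₂.extend_apply, hj₂.extend_apply] at h
    exact congrArg j₂ (hj₁ (Sum.inl_injective h))
  · obtain ⟨s, rfl⟩ := hi
    simp [hj₂.extend_apply, Function.extend_apply' _ _ _ hi'] at h
  · obtain ⟨s', rfl⟩ := hi'
    simp [hj₂.extend_apply, Function.extend_apply' _ _ _ hi] at h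
  · rw [Function.extend_apply' _ _ _ hi, Function.extend_apply' _ _ _ hi'] at h
    exact Sum.inr_injective h

theorem subst_eq_extend {E : Type*} {k1 k2 l : ℕ} (j1 : Fin l ↪ Fin k1) (j2 : Fin l ↪ Fin k2)
    (x : Fin k1 → E) (z : Fin k2 → E) :
    subst j1 j2 x z = Function.extend j2 (x ∘ j1) z := by
  ext i
  simp only [subst, Function.extend_def, Function.comp_apply]

variable {E : Type*} [MeasurableSpace E] (P : Measure E) [IsProbabilityMeasure P]

theorem measurePreserving_extend_comp [Fintype ι] [Fintype κ]
    (hj₁ : j₁.Injective) (hj₂ : j₂.Injective) :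
    MeasurePreserving
      (fun q : (ι → E) × (κ → E) => Function.extend j₂ (q.1 ∘ j₁) q.2)
      ((Measure.pi fun _ => P).prod (Measure.pi fun _ => P)) (Measure.pi fun _ => P) := by
  convert (measurePreserving_pi_comp_injective (fun _ => P)
      (injective_extend_inl_inr hj₁ hj₂)).comp
    (measurePreserving_sumPiEquivProdPi_symm (X := fun _ : ι ⊕ κ => E) fun _ => P) using 1
  ext q i
  exact (Function.apply_extend (g := Sum.inl ∘ j₁) (Sum.elim q.1 q.2) j₂ Sum.inr i).symm

theorem measurePreserving_subst {k1 k2 l : ℕ} (j1 : Fin l ↪ Fin k1) (j2 : Fin l ↪ Fin k2) :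
    MeasurePreserving (fun q : (Fin k1 → E) × (Fin k2 → E) => subst j1 j2 q.1 q.2)
      ((Measure.pi fun _ => P).prod (Measure.pi fun _ => P)) (Measure.pi fun _ => P) := by
  simpa only [subst_eq_extend] using measurePreserving_extend_comp P j1.injective j2.injective

end Substitution

section LpNorm

variable {Ω : Type*} [MeasurableSpace Ω] {F : Type*} [NormedAddCommGroup F]

theorem memLp_of_smul_measure_le {μ ν : Measure Ω} {p c : ℝ≥0∞} {f : Ω → F} (hc₀ : c ≠ 0)
    (hc : c ≠ ∞) (hle : c • ν ≤ μ) (hf : MemLp f p μ) : MemLp f p ν := by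
  have h := (hf.mono_measure hle).smul_measure (ENNReal.inv_ne_top.2 hc₀)
  rwa [smul_smul, ENNReal.inv_mul_cancel hc₀ hc, one_smul] at h

theorem sqrt_mul_toReal_eLpNorm_two_le {μ ν : Measure Ω} {c : ℝ} {f : Ω → F} (hc : 0 ≤ c)
    (hle : ENNReal.ofReal c • ν ≤ μ) (hf : MemLp f 2 μ) :
    √c * (eLpNorm f 2 ν).toReal ≤ (eLpNorm f 2 μ).toReal := by
  have h := ENNReal.toReal_mono hf.eLpNorm_ne_top (eLpNorm_mono_measure f hle)
  rw [eLpNorm_smul_measure_of_ne_top (by simp), smul_eq_mul, ENNReal.toReal_mul,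
    ← ENNReal.toReal_rpow, ENNReal.toReal_ofReal hc] at h
  simpa [Real.sqrt_eq_rpow] using h

theorem norm_integral_smul_le_eLpNorm_mul_eLpNorm [NormedSpace ℝ F] {𝕜 : Type*} [NormedRing 𝕜]
    [Module 𝕜 F] [IsBoundedSMul 𝕜 F] {p q : ℝ≥0∞} [ENNReal.HolderTriple p q 1] {μ : Measure Ω}
    {f : Ω → 𝕜} {g : Ω → F} (hf : MemLp f p μ) (hg : MemLp g q μ) :
    ‖∫ ω, f ω • g ω ∂μ‖ ≤ (eLpNorm f p μ).toReal * (eLpNorm g q μ).toReal := by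
  rw [← ENNReal.toReal_mul, ← toReal_enorm]
  refine ENNReal.toReal_mono (ENNReal.mul_ne_top hf.eLpNorm_ne_top hg.eLpNorm_ne_top) ?_
  calc ‖∫ ω, f ω • g ω ∂μ‖ₑ
      ≤ ∫⁻ ω, ‖f ω • g ω‖ₑ ∂μ := enorm_integral_le_lintegral_enorm _
    _ = eLpNorm (f • g) 1 μ := eLpNorm_one_eq_lintegral_enorm.symm
    _ ≤ eLpNorm f p μ * eLpNorm g q μ := eLpNorm_smul_le_mul_eLpNorm hg.1 hf.1

theorem abs_integral_comp_mul_comp_le {Ω₁ Ω₂ : Type*} [MeasurableSpace Ω₁] [MeasurableSpace Ω₂]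
    {μ : Measure Ω} {μ₁ : Measure Ω₁} {μ₂ : Measure Ω₂} {φ : Ω → Ω₁} {ψ : Ω → Ω₂}
    {f : Ω₁ → ℝ} {g : Ω₂ → ℝ} (hφ : MeasurePreserving φ μ μ₁) (hψ : MeasurePreserving ψ μ μ₂)
    (hf : MemLp f 2 μ₁) (hg : MemLp g 2 μ₂) :
    |∫ ω, f (φ ω) * g (ψ ω) ∂μ| ≤ (eLpNorm f 2 μ₁).toReal * (eLpNorm g 2 μ₂).toReal := by
  rw [← eLpNorm_comp_measurePreserving hf.1 hφ, ← eLpNorm_comp_measurePreserving hg.1 hψ]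
  exact norm_integral_smul_le_eLpNorm_mul_eLpNorm (hf.comp_measurePreserving hφ)
    (hg.comp_measurePreserving hψ)

end LpNorm

theorem abs_inv_card_mul_sum_sum_le {ι κ : Type*} [Fintype ι] [Fintype κ] [Nonempty ι] [Nonempty κ]
    {u : ι → κ → ℝ} {M : ℝ} (hu : ∀ i j, |u i j| ≤ M) :
    |((Fintype.card ι * Fintype.card κ : ℕ) : ℝ)⁻¹ * ∑ i, ∑ j, u i j| ≤ M := by
  have card_pos : (0 : ℝ) < (Fintype.card ι * Fintype.card κ : ℕ) := by
    exact_mod_cast Nat.mul_pos Fintype.card_pos Fintype.card_pos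
  rw [abs_mul, abs_of_pos (inv_pos.2 card_pos), inv_mul_le_iff₀ card_pos]
  calc |∑ i, ∑ j, u i j|
      ≤ ∑ i, ∑ j, |u i j| :=
        (Finset.abs_sum_le_sum_abs _ _).trans
          (Finset.sum_le_sum fun _ _ => Finset.abs_sum_le_sum_abs _ _)
    _ ≤ ∑ _i : ι, ∑ _j : κ, M :=
        Finset.sum_le_sum fun i _ => Finset.sum_le_sum fun j _ => hu i j
    _ = (Fintype.card ι * Fintype.card κ : ℕ) * M := by simp [mul_assoc]

section Domination

variable {E : Type*} [MeasurableSpace E] {μ : Measure E}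

theorem Assumption21.ofReal_smul_le {a : ℕ → ℝ} {P : ℕ → Measure E} (h21 : Assumption21 μ a P)
    {n : ℕ} (hn : 1 ≤ n) : ENNReal.ofReal ((n : ℝ) / a n) • P n ≤ μ := by
  obtain ⟨-, -, -, -, le_succ, tendsto_measure⟩ := h21
  refine Measure.le_iff.2 fun B hB => ge_of_tendsto (tendsto_measure B hB) ?_
  filter_upwards [eventually_ge_atTop n] with m hm
  induction m, hm using Nat.le_induction with
  | base => rfl
  | succ m hm ih => exact ih.trans (by exact_mod_cast le_succ B hB m (hn.trans hm))

variable {P : Measure E} {c : ℝ}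

section Pi

variable [SigmaFinite P] {ι : Type*} [Fintype ι] {F : Type*} [NormedAddCommGroup F]
  {f : (ι → E) → F}

theorem ofReal_pow_card_smul_pi_le_pi (hc : 0 ≤ c) (hle : ENNReal.ofReal c • P ≤ μ) :
    ENNReal.ofReal (c ^ Fintype.card ι) • (Measure.pi fun _ : ι => P) ≤
      Measure.pi fun _ : ι => μ := by
  simpa [ENNReal.ofReal_pow hc] using prod_smul_pi_le_pi fun _ : ι => hle

theorem memLp_pi_of_ofReal_smul_le (hc : 0 < c) (hle : ENNReal.ofReal c • P ≤ μ) {p : ℝ≥0∞}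
    (hf : MemLp f p (Measure.pi fun _ => μ)) : MemLp f p (Measure.pi fun _ => P) :=
  memLp_of_smul_measure_le (ENNReal.ofReal_pos.2 (pow_pos hc _)).ne' ENNReal.ofReal_ne_top
    (ofReal_pow_card_smul_pi_le_pi hc.le hle) hf

theorem sqrt_pow_card_mul_toReal_eLpNorm_two_pi_le (hc : 0 ≤ c)
    (hle : ENNReal.ofReal c • P ≤ μ) (hf : MemLp f 2 (Measure.pi fun _ => μ)) :
    √c ^ Fintype.card ι * (eLpNorm f 2 (Measure.pi fun _ => P)).toReal ≤
      (eLpNorm f 2 (Measure.pi fun _ => μ)).toReal := by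
  have sqrt_pow_card : √(c ^ Fintype.card ι) = √c ^ Fintype.card ι := by
    rw [Real.sqrt_eq_iff_eq_sq (by positivity) (by positivity), pow_right_comm, Real.sq_sqrt hc]
  rw [← sqrt_pow_card]
  exact sqrt_mul_toReal_eLpNorm_two_le (by positivity) (ofReal_pow_card_smul_pi_le_pi hc hle) hf

end Pi

theorem abs_Fln_le_general [IsProbabilityMeasure P] (hc : 0 < c)
    (hle : ENNReal.ofReal c • P ≤ μ) {k1 k2 l : ℕ} (hl1 : l ≤ k1) (hl2 : l ≤ k2)
    {f : (Fin k1 → E) → ℝ} {g : (Fin k2 → E) → ℝ}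
    (hf : MemLp f 2 (Measure.pi fun _ => μ)) (hg : MemLp g 2 (Measure.pi fun _ => μ)) :
    |Fln P c k1 k2 l f g| ≤
      (eLpNorm f 2 (Measure.pi fun _ => μ)).toReal *
        (eLpNorm g 2 (Measure.pi fun _ => μ)).toReal := by
  have : Nonempty (Fin l ↪ Fin k1) := ⟨Fin.castLEEmb hl1⟩
  have : Nonempty (Fin l ↪ Fin k2) := ⟨Fin.castLEEmb hl2⟩
  set A := (eLpNorm f 2 (Measure.pi fun _ => P)).toReal
  set B := (eLpNorm g 2 (Measure.pi fun _ => P)).toReal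
  have diagram_le (j1 : Fin l ↪ Fin k1) (j2 : Fin l ↪ Fin k2) :
      |∫ q : (Fin k1 → E) × (Fin k2 → E), f q.1 * g (subst j1 j2 q.1 q.2)
        ∂((Measure.pi fun _ => P).prod (Measure.pi fun _ => P))| ≤ A * B :=
    abs_integral_comp_mul_comp_le measurePreserving_fst (measurePreserving_subst P j1 j2)
      (memLp_pi_of_ofReal_smul_le hc hle hf) (memLp_pi_of_ofReal_smul_le hc hle hg)
  have scaled_f_le : √c ^ k1 * A ≤ (eLpNorm f 2 (Measure.pi fun _ => μ)).toReal := by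
    simpa only [Fintype.card_fin] using sqrt_pow_card_mul_toReal_eLpNorm_two_pi_le hc.le hle hf
  have scaled_g_le : √c ^ k2 * B ≤ (eLpNorm g 2 (Measure.pi fun _ => μ)).toReal := by
    simpa only [Fintype.card_fin] using sqrt_pow_card_mul_toReal_eLpNorm_two_pi_le hc.le hle hg
  calc |Fln P c k1 k2 l f g|
      ≤ √c ^ (k1 + k2) * (A * B) := by
        rw [Fln, mul_assoc, abs_mul, abs_of_nonneg (by positivity)]
        gcongr
        exact abs_inv_card_mul_sum_sum_le diagram_le
    _ = (√c ^ k1 * A) * (√c ^ k2 * B) := by ring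
    _ ≤ _ := by gcongr

end Domination

/-- Under Assumption 2.1, `|F_l^{(n)}(f,g)| ≤ ‖f‖_{L²(μ^{k1})} ‖g‖_{L²(μ^{k2})}`
for every `n ≥ 1`. -/
theorem abs_Fln_le
    {E : Type*} [MeasurableSpace E] (μ : Measure E) [SigmaFinite μ] [NullSingletonClass μ]
    (a : ℕ → ℝ) (P : ℕ → Measure E) [∀ n, IsProbabilityMeasure (P n)]
    (h21 : Assumption21 μ a P)
    (k1 k2 l : ℕ) (hk1 : 1 ≤ k1) (hk2 : 1 ≤ k2) (hl1 : l ≤ k1) (hl2 : l ≤ k2)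
    (f : (Fin k1 → E) → ℝ) (g : (Fin k2 → E) → ℝ)
    (hf : MemLp f 2 (Measure.pi fun _ : Fin k1 => μ))
    (hg : MemLp g 2 (Measure.pi fun _ : Fin k2 => μ))
    (n : ℕ) (hn : 1 ≤ n) :
    |Fln (P n) ((n : ℝ) / a n) k1 k2 l f g| ≤
      (eLpNorm f 2 (Measure.pi fun _ : Fin k1 => μ)).toReal *
        (eLpNorm g 2 (Measure.pi fun _ : Fin k2 => μ)).toReal := by
  have hc : 0 < (n : ℝ) / a n := div_pos (by exact_mod_cast hn) (h21.2.1 n hn)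
  exact abs_Fln_le_general hc (h21.ofReal_smul_le hn) hl1 hl2 hf hg
end

section
/- Under Assumption 2.1, let k_1, k_2 ≥ 1, f ∈ L²(μ^{k_1}) and g ∈ L²(μ^{k_2}). If either (i) k_1 ≠ k_2 and 0 ≤ l ≤ min(k_1, k_2), or (ii) k_1 = k_2 and 0 ≤ l < k_1, then F_l^{(n)}(f,g) → 0 as n → ∞. -/
open MeasureTheory Filter Topology
open scoped ENNReal NNReal

/-!
Write `D = √c`. Domination `D² P ≤ μ` gives `D ^ k ‖f‖_{L²(P^k)} ≤ ‖f‖_{L²(μ^k)}`, so by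
Cauchy–Schwarz each diagram contributes at most `‖f‖ ‖g‖` to `F_l`. The hypothesis on `l` leaves a
variable of `f`, say, that is not shared with `g`. Restrict that variable to a set `A` of finite
`μ`-measure; the remainder is small in `L²`, uniformly in `n`. The restriction can be charged to `g`
instead of `f`: it turns `g` into `1_A ⊗ g`, a square-integrable function of one variable more, for
which the same bound absorbs an extra factor `D`. The restricted contribution is therefore
`O(1 / D)`.
-/

section ProductMeasures

variable {ι κ : Type*} [Fintype ι] [Fintype κ]

lemma prod_smul_pi_le {X : ι → Type*} [∀ i, MeasurableSpace (X i)] {P μ : ∀ i, Measure (X i)}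
    [∀ i, SigmaFinite (P i)] {c : ι → ℝ≥0∞} (hP : ∀ i, c i • P i ≤ μ i) :
    (∏ i, c i) • Measure.pi P ≤ Measure.pi μ := by
  have outer_le : ((∏ i, c i) • Measure.pi P).toOuterMeasure ≤
      OuterMeasure.pi fun i => (μ i).toOuterMeasure := by
    refine OuterMeasure.le_pi.2 fun s _ => ?_
    calc ((∏ i, c i) • Measure.pi P) (Set.univ.pi s)
        = ∏ i, (c i • P i) (s i) := by simp [Measure.pi_pi, Finset.prod_mul_distrib]
      _ ≤ ∏ i, μ i (s i) := Finset.prod_le_prod' fun i _ => hP i (s i)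
  refine Measure.le_iff.2 fun s hs => ?_
  rw [Measure.pi_def μ, toMeasure_apply _ _ hs]
  exact outer_le s

lemma pi_absolutelyContinuous_of_smul_le {X : ι → Type*} [∀ i, MeasurableSpace (X i)]
    {P μ : ∀ i, Measure (X i)} [∀ i, SigmaFinite (P i)] {c : ι → ℝ≥0∞} (hc : ∀ i, c i ≠ 0)
    (hP : ∀ i, c i • P i ≤ μ i) : Measure.pi P ≪ Measure.pi μ :=
  (Measure.absolutelyContinuous_smul (Finset.prod_ne_zero_iff.2 fun i _ => hc i)).trans
    (Measure.absolutelyContinuous_of_le (prod_smul_pi_le hP))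

lemma measurePreserving_comp_injective {X : κ → Type*} [∀ i, MeasurableSpace (X i)]
    {P : ∀ i, Measure (X i)} [∀ i, IsProbabilityMeasure (P i)] {σ : ι → κ}
    (hσ : Function.Injective σ) :
    MeasurePreserving (fun (w : ∀ k, X k) i => w (σ i)) (Measure.pi P)
      (Measure.pi fun i => P (σ i)) := by
  refine ⟨by fun_prop, ?_⟩
  have indep : ProbabilityTheory.iIndepFun (fun i (w : ∀ k, X k) => w (σ i)) (Measure.pi P) :=
    (ProbabilityTheory.iIndepFun_pi (X := fun _ => id) fun _ => aemeasurable_id).precomp hσ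
  have map_eval (i : ι) : (Measure.pi P).map (fun w => w (σ i)) = P (σ i) :=
    (measurePreserving_eval P (σ i)).map_eq
  simpa only [map_eval] using
    indep.map_fun_eq_pi_map fun i => (measurable_pi_apply (σ i)).aemeasurable

variable {E F : Type*} [MeasurableSpace E] [NormedAddCommGroup F]

section SmulLe

variable {P μ : Measure E} [IsProbabilityMeasure P] {σ : ι → κ} {f : (ι → E) → F}

lemma aestronglyMeasurable_comp_injective {c : ℝ≥0∞} (hc : c ≠ 0) (hP : c • P ≤ μ)
    (hσ : Function.Injective σ) (hf : AEStronglyMeasurable f (Measure.pi fun _ => μ)) :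
    AEStronglyMeasurable (fun w : κ → E => f (w ∘ σ)) (Measure.pi fun _ => P) :=
  (hf.mono_ac (pi_absolutelyContinuous_of_smul_le (fun _ => hc) fun _ => hP)).comp_measurePreserving
    (measurePreserving_comp_injective hσ)

lemma pow_card_mul_eLpNorm_two_comp_le {D : ℝ≥0∞} (hD : D ≠ 0) (hP : D ^ 2 • P ≤ μ)
    (hσ : Function.Injective σ) (hf : AEStronglyMeasurable f (Measure.pi fun _ => μ)) :
    D ^ Fintype.card ι * eLpNorm (fun w : κ → E => f (w ∘ σ)) 2 (Measure.pi fun _ => P) ≤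
      eLpNorm f 2 (Measure.pi fun _ => μ) := by
  have hsqrt : ((D ^ 2) ^ Fintype.card ι) ^ (1 / (2 : ℝ≥0∞)).toReal = D ^ Fintype.card ι := by
    rw [← pow_mul, mul_comm, pow_mul, ← ENNReal.rpow_natCast (D ^ _) 2, ← ENNReal.rpow_mul]
    simp
  have hfP : AEStronglyMeasurable f (Measure.pi fun _ => P) :=
    hf.mono_ac (pi_absolutelyContinuous_of_smul_le (fun _ => pow_ne_zero 2 hD) fun _ => hP)
  have hcomp : eLpNorm (fun w : κ → E => f (w ∘ σ)) 2 (Measure.pi fun _ => P) =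
      eLpNorm f 2 (Measure.pi fun _ => P) :=
    eLpNorm_comp_measurePreserving hfP (measurePreserving_comp_injective hσ)
  have hpi : (D ^ 2) ^ Fintype.card ι • (Measure.pi fun _ : ι => P) ≤ Measure.pi fun _ => μ := by
    simpa only [Finset.prod_const, Finset.card_univ] using prod_smul_pi_le fun _ : ι => hP
  calc D ^ Fintype.card ι * eLpNorm (fun w : κ → E => f (w ∘ σ)) 2 (Measure.pi fun _ => P)
      = eLpNorm f 2 ((D ^ 2) ^ Fintype.card ι • Measure.pi fun _ => P) := by
        rw [hcomp, eLpNorm_smul_measure_of_ne_top ENNReal.ofNat_ne_top, hsqrt, smul_eq_mul]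
    _ ≤ eLpNorm f 2 (Measure.pi fun _ => μ) := eLpNorm_mono_measure f hpi

end SmulLe

lemma tendsto_eLpNorm_indicator_of_antitone {Ω : Type*} [MeasurableSpace Ω] {ν : Measure Ω}
    {p : ℝ≥0∞} (hp0 : p ≠ 0) (hp : p ≠ ∞) {f : Ω → F} (hf : MemLp f p ν) {S : ℕ → Set Ω}
    (hS : ∀ n, MeasurableSet (S n)) (hanti : Antitone S) (hempty : ⋂ n, S n = ∅) :
    Tendsto (fun n => eLpNorm ((S n).indicator f) p ν) atTop (𝓝 0) := by
  have hfin : ∫⁻ x, ‖f x‖ₑ ^ p.toReal ∂ν ≠ ∞ :=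
    (lintegral_rpow_enorm_lt_top_of_eLpNorm_lt_top hp0 hp hf.2).ne
  have hmass : Tendsto (fun n => ∫⁻ x in S n, ‖f x‖ₑ ^ p.toReal ∂ν) atTop (𝓝 0) := by
    have := isFiniteMeasure_withDensity hfin
    have hlim := tendsto_measure_iInter_atTop (μ := ν.withDensity fun x => ‖f x‖ₑ ^ p.toReal)
      (fun n => (hS n).nullMeasurableSet) hanti ⟨0, measure_ne_top _ _⟩
    simpa only [Function.comp_def, hempty, measure_empty, withDensity_apply _ (hS _)] using hlim
  have hroot := hmass.ennrpow_const (1 / p.toReal)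
  rw [ENNReal.zero_rpow_of_pos (one_div_pos.2 (ENNReal.toReal_pos hp0 hp))] at hroot
  simpa only [eLpNorm_indicator_eq_eLpNorm_restrict (hS _),
    eLpNorm_eq_lintegral_rpow_enorm_toReal hp0 hp] using hroot

lemma tendsto_eLpNorm_indicator_compl_preimage_spanningSets {μ : Measure E}
    [SigmaFinite μ] {p : ℝ≥0∞} (hp0 : p ≠ 0) (hp : p ≠ ∞) (i : ι) {f : (ι → E) → F}
    (hf : MemLp f p (Measure.pi fun _ => μ)) :
    Tendsto (fun N => eLpNorm (((· i) ⁻¹' spanningSets μ N)ᶜ.indicator f) p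
      (Measure.pi fun _ => μ)) atTop (𝓝 0) := by
  refine tendsto_eLpNorm_indicator_of_antitone hp0 hp hf (fun N => ?_) (fun M N hMN => ?_) ?_
  · exact (measurable_pi_apply i (measurableSet_spanningSets μ N)).compl
  · exact Set.compl_subset_compl.2 (Set.preimage_mono (monotone_spanningSets μ hMN))
  · rw [← Set.compl_iUnion, ← Set.preimage_iUnion, iUnion_spanningSets, Set.preimage_univ,
      Set.compl_univ]

lemma memLp_mul_prod {Ω Ω' 𝕜 : Type*} [MeasurableSpace Ω] [MeasurableSpace Ω'] [NormedField 𝕜]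
    {ν : Measure Ω} {ν' : Measure Ω'} [SFinite ν] [SFinite ν'] {p : ℝ≥0∞} (hp0 : p ≠ 0) (hp : p ≠ ∞)
    {f : Ω → 𝕜} {g : Ω' → 𝕜} (hf : MemLp f p ν) (hg : MemLp g p ν') :
    MemLp (fun z : Ω × Ω' => f z.1 * g z.2) p (ν.prod ν') := by
  have hmeas : AEStronglyMeasurable (fun z : Ω × Ω' => f z.1 * g z.2) (ν.prod ν') :=
    hf.1.comp_fst.mul hg.1.comp_snd
  refine (integrable_norm_rpow_iff hmeas hp0 hp).1 ?_
  simp only [norm_mul, Real.mul_rpow (norm_nonneg _) (norm_nonneg _)]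
  exact (hf.integrable_norm_rpow hp0 hp).mul_prod (hg.integrable_norm_rpow hp0 hp)

lemma memLp_indicator_one_mul_pi_sum {𝕜 : Type*} [NormedField 𝕜] {μ : Measure E} [SigmaFinite μ]
    {p : ℝ≥0∞} (hp0 : p ≠ 0) (hp : p ≠ ∞) {A : Set E} (hA : MeasurableSet A) (hμA : μ A ≠ ∞)
    {g : (ι → E) → 𝕜} (hg : MemLp g p (Measure.pi fun _ => μ)) :
    MemLp (fun u : Unit ⊕ ι → E => A.indicator 1 (u (Sum.inl ())) * g (u ∘ Sum.inr)) p
      (Measure.pi fun _ => μ) := by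
  have hone : MemLp (A.indicator (1 : E → 𝕜)) p μ :=
    memLp_indicator_const p hA 1 (Or.inr hμA)
  have hone_pi : MemLp (fun v : Unit → E => A.indicator (1 : E → 𝕜) (v ())) p
      (Measure.pi fun _ => μ) :=
    hone.comp_measurePreserving (measurePreserving_piUnique fun _ : Unit => μ)
  exact (memLp_mul_prod hp0 hp hone_pi hg).comp_measurePreserving
    (measurePreserving_sumPiEquivProdPi fun _ : Unit ⊕ ι => μ)

end ProductMeasures

section ScaledPairing

variable {E ι ι' κ 𝕜 : Type*} [MeasurableSpace E] [Fintype ι] [Fintype ι'] [Fintype κ]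
  [NormedField 𝕜]

/-- The `L¹` size of a contracted tensor product `f ⊗ g`, scaled by one factor `D` per variable of
`f` and of `g`. The diagram is encoded by the maps `σ` and `τ`, which send each variable of `f` and
`g` to a common index set `κ`; variables with the same image are identified. -/
noncomputable def scaledPairing (D : ℝ≥0∞) (P : Measure E) (σ : ι → κ) (τ : ι' → κ)
    (f : (ι → E) → 𝕜) (g : (ι' → E) → 𝕜) : ℝ≥0∞ :=
  D ^ (Fintype.card ι + Fintype.card ι') *
    eLpNorm (fun w : κ → E => f (w ∘ σ) * g (w ∘ τ)) 1 (Measure.pi fun _ => P)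

lemma scaledPairing_comm (D : ℝ≥0∞) (P : Measure E) (σ : ι → κ) (τ : ι' → κ)
    (f : (ι → E) → 𝕜) (g : (ι' → E) → 𝕜) :
    scaledPairing D P σ τ f g = scaledPairing D P τ σ g f := by
  simp only [scaledPairing, add_comm (Fintype.card ι), mul_comm (f _)]

lemma mul_scaledPairing_indicator (D : ℝ≥0∞) (P : Measure E) (σ : ι → κ) (τ : ι' → κ)
    (f : (ι → E) → 𝕜) (g : (ι' → E) → 𝕜) (i : ι) (A : Set E) :
    D * scaledPairing D P σ τ (((· i) ⁻¹' A).indicator f) g =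
      scaledPairing D P σ (Sum.elim (fun _ : Unit => σ i) τ) f
        (fun u => A.indicator 1 (u (Sum.inl ())) * g (u ∘ Sum.inr)) := by
  have hmove (w : κ → E) : ((· i) ⁻¹' A).indicator f (w ∘ σ) * g (w ∘ τ) =
      f (w ∘ σ) * (A.indicator 1 (w (σ i)) * g (w ∘ τ)) := by
    by_cases hw : w (σ i) ∈ A <;> simp [hw]
  simp only [scaledPairing, hmove, Fintype.card_sum, Fintype.card_unit, ← mul_assoc, ← pow_succ']
  congr 2
  omega

variable {D : ℝ≥0∞} {P μ : Measure E} [IsProbabilityMeasure P] {σ : ι → κ} {τ : ι' → κ}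
  {f : (ι → E) → 𝕜} {g : (ι' → E) → 𝕜}

lemma scaledPairing_le (hD : D ≠ 0) (hP : D ^ 2 • P ≤ μ) (hσ : Function.Injective σ)
    (hτ : Function.Injective τ) (hf : AEStronglyMeasurable f (Measure.pi fun _ => μ))
    (hg : AEStronglyMeasurable g (Measure.pi fun _ => μ)) :
    scaledPairing D P σ τ f g ≤
      eLpNorm f 2 (Measure.pi fun _ => μ) * eLpNorm g 2 (Measure.pi fun _ => μ) := by
  have holder : eLpNorm (fun w : κ → E => f (w ∘ σ) * g (w ∘ τ)) 1 (Measure.pi fun _ => P) ≤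
      eLpNorm (fun w : κ → E => f (w ∘ σ)) 2 (Measure.pi fun _ => P) *
        eLpNorm (fun w : κ → E => g (w ∘ τ)) 2 (Measure.pi fun _ => P) :=
    eLpNorm_smul_le_mul_eLpNorm (φ := fun w : κ → E => f (w ∘ σ)) (p := 2) (q := 2) (r := 1)
      (aestronglyMeasurable_comp_injective (pow_ne_zero 2 hD) hP hτ hg)
      (aestronglyMeasurable_comp_injective (pow_ne_zero 2 hD) hP hσ hf)
  calc scaledPairing D P σ τ f g
      ≤ (D ^ Fintype.card ι * eLpNorm (fun w : κ → E => f (w ∘ σ)) 2 (Measure.pi fun _ => P)) *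
        (D ^ Fintype.card ι' *
          eLpNorm (fun w : κ → E => g (w ∘ τ)) 2 (Measure.pi fun _ => P)) := by
        rw [mul_mul_mul_comm, ← pow_add]
        exact mul_le_mul_right holder _
    _ ≤ _ := mul_le_mul' (pow_card_mul_eLpNorm_two_comp_le hD hP hσ hf)
        (pow_card_mul_eLpNorm_two_comp_le hD hP hτ hg)

lemma scaledPairing_add_left_le {f₁ f₂ : (ι → E) → 𝕜} (hD : D ≠ 0) (hP : D ^ 2 • P ≤ μ)
    (hσ : Function.Injective σ) (hτ : Function.Injective τ)
    (hf₁ : AEStronglyMeasurable f₁ (Measure.pi fun _ => μ))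
    (hf₂ : AEStronglyMeasurable f₂ (Measure.pi fun _ => μ))
    (hg : AEStronglyMeasurable g (Measure.pi fun _ => μ)) :
    scaledPairing D P σ τ (f₁ + f₂) g ≤
      scaledPairing D P σ τ f₁ g + scaledPairing D P σ τ f₂ g := by
  have hg' := aestronglyMeasurable_comp_injective (pow_ne_zero 2 hD) hP hτ hg
  simp only [scaledPairing, Pi.add_apply, add_mul, ← mul_add]
  exact mul_le_mul_right (eLpNorm_add_le
    ((aestronglyMeasurable_comp_injective (pow_ne_zero 2 hD) hP hσ hf₁).mul hg')
    ((aestronglyMeasurable_comp_injective (pow_ne_zero 2 hD) hP hσ hf₂).mul hg') le_rfl) _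

end ScaledPairing

section Limit

variable {E ι ι' κ 𝕜 α : Type*} [MeasurableSpace E] [Fintype ι] [Fintype ι'] [Fintype κ]
  [NormedField 𝕜] {F : Filter α} {μ : Measure E} [SigmaFinite μ] {D : α → ℝ≥0∞}
  {P : α → Measure E} [∀ n, IsProbabilityMeasure (P n)] {σ : ι → κ} {τ : ι' → κ}
  {f : (ι → E) → 𝕜} {g : (ι' → E) → 𝕜} {i : ι}

lemma tendsto_scaledPairing_indicator_zero (hD : Tendsto D F (𝓝 ∞))
    (hP : ∀ᶠ n in F, D n ^ 2 • P n ≤ μ) (hσ : Function.Injective σ) (hτ : Function.Injective τ)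
    (hi : σ i ∉ Set.range τ) {A : Set E} (hA : MeasurableSet A) (hμA : μ A ≠ ∞)
    (hf : MemLp f 2 (Measure.pi fun _ => μ)) (hg : MemLp g 2 (Measure.pi fun _ => μ)) :
    Tendsto (fun n => scaledPairing (D n) (P n) σ τ (((· i) ⁻¹' A).indicator f) g) F (𝓝 0) := by
  let g' : (Unit ⊕ ι' → E) → 𝕜 := fun u => A.indicator 1 (u (Sum.inl ())) * g (u ∘ Sum.inr)
  have hg' : MemLp g' 2 (Measure.pi fun _ => μ) :=
    memLp_indicator_one_mul_pi_sum two_ne_zero ENNReal.ofNat_ne_top hA hμA hg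
  have hτ' : Function.Injective (Sum.elim (fun _ : Unit => σ i) τ) :=
    (Function.injective_of_subsingleton _).sumElim hτ fun _ j hj => hi ⟨j, hj.symm⟩
  let C := eLpNorm f 2 (Measure.pi fun _ => μ) * eLpNorm g' 2 (Measure.pi fun _ => μ)
  have hC : C ≠ ∞ := ENNReal.mul_ne_top hf.eLpNorm_ne_top hg'.eLpNorm_ne_top
  have hlim : Tendsto (fun n => C / D n) F (𝓝 0) := by
    simpa only [ENNReal.div_top] using ENNReal.Tendsto.const_div hD (Or.inr hC)
  refine tendsto_of_tendsto_of_tendsto_of_le_of_le' tendsto_const_nhds hlim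
    (Eventually.of_forall fun _ => zero_le) ?_
  filter_upwards [hP, hD.eventually_ne ENNReal.top_ne_zero] with n hPn hDn
  rw [ENNReal.le_div_iff_mul_le (Or.inl hDn) (Or.inr hC), mul_comm, mul_scaledPairing_indicator]
  exact scaledPairing_le hDn hPn hσ hτ' hf.1 hg'.1

theorem tendsto_scaledPairing_zero (hD : Tendsto D F (𝓝 ∞))
    (hP : ∀ᶠ n in F, D n ^ 2 • P n ≤ μ) (hσ : Function.Injective σ) (hτ : Function.Injective τ)
    (hi : σ i ∉ Set.range τ) (hf : MemLp f 2 (Measure.pi fun _ => μ))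
    (hg : MemLp g 2 (Measure.pi fun _ => μ)) :
    Tendsto (fun n => scaledPairing (D n) (P n) σ τ f g) F (𝓝 0) := by
  refine ENNReal.tendsto_nhds_zero.2 fun ε hε => ?_
  have hε2 : 0 < ε / 2 := ENNReal.half_pos hε.ne'
  let S (N : ℕ) : Set (ι → E) := (· i) ⁻¹' spanningSets μ N
  have hS (N : ℕ) : MeasurableSet (S N) :=
    measurable_pi_apply i (measurableSet_spanningSets μ N)
  have htail : Tendsto (fun N => eLpNorm ((S N)ᶜ.indicator f) 2 (Measure.pi fun _ => μ) *
      eLpNorm g 2 (Measure.pi fun _ => μ)) atTop (𝓝 0) := by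
    simpa only [zero_mul] using ENNReal.Tendsto.mul_const
      (tendsto_eLpNorm_indicator_compl_preimage_spanningSets two_ne_zero ENNReal.ofNat_ne_top i hf)
      (Or.inr hg.eLpNorm_ne_top)
  obtain ⟨N, hN⟩ := (ENNReal.tendsto_nhds_zero.1 htail (ε / 2) hε2).exists
  have hcore := tendsto_scaledPairing_indicator_zero hD hP hσ hτ hi
    (measurableSet_spanningSets μ N) (measure_spanningSets_lt_top μ N).ne hf hg
  filter_upwards [hP, hD.eventually_ne ENNReal.top_ne_zero,
    ENNReal.tendsto_nhds_zero.1 hcore (ε / 2) hε2] with n hPn hDn hcore_n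
  have hfS := hf.1.indicator (hS N)
  have hfSc := hf.1.indicator (hS N).compl
  calc scaledPairing (D n) (P n) σ τ f g
      = scaledPairing (D n) (P n) σ τ ((S N).indicator f + (S N)ᶜ.indicator f) g := by
        rw [Set.indicator_self_add_compl]
    _ ≤ scaledPairing (D n) (P n) σ τ ((S N).indicator f) g +
        scaledPairing (D n) (P n) σ τ ((S N)ᶜ.indicator f) g :=
        scaledPairing_add_left_le hDn hPn hσ hτ hfS hfSc hg.1
    _ ≤ ε / 2 + ε / 2 :=
        add_le_add hcore_n ((scaledPairing_le hDn hPn hσ hτ hfSc hg.1).trans hN)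
    _ = ε := ENNReal.add_halves ε

end Limit

section Diagrams

lemma exists_notMem_range_of_card_lt {ι κ : Type*} [Fintype ι] [Fintype κ] (j : ι → κ)
    (h : Fintype.card ι < Fintype.card κ) : ∃ k, k ∉ Set.range j := by
  by_contra! hj
  exact h.not_ge (Fintype.card_le_of_surjective j hj)

variable {E : Type*} {k1 k2 l : ℕ} (j1 : Fin l ↪ Fin k1) (j2 : Fin l ↪ Fin k2)

lemma subst_apply_embedding (x : Fin k1 → E) (z : Fin k2 → E) (s : Fin l) :
    subst j1 j2 x z (j2 s) = x (j1 s) := by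
  have h : ∃ t, j2 t = j2 s := ⟨s, rfl⟩
  rw [subst, dif_pos h, j2.injective (Classical.choose_spec h)]

lemma subst_apply_of_notMem_range (x : Fin k1 → E) (z : Fin k2 → E) {i : Fin k2}
    (hi : i ∉ Set.range j2) : subst j1 j2 x z i = z i :=
  dif_neg hi

lemma subst_comp {E' : Type*} (φ : E → E') (x : Fin k1 → E) (z : Fin k2 → E) :
    subst j1 j2 (φ ∘ x) (φ ∘ z) = φ ∘ subst j1 j2 x z := by
  funext i
  by_cases hi : i ∈ Set.range j2
  · obtain ⟨s, rfl⟩ := hi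
    simp only [Function.comp_apply, subst_apply_embedding]
  · simp only [Function.comp_apply, subst_apply_of_notMem_range _ _ _ _ hi]

lemma subst_injective {x : Fin k1 → E} {z : Fin k2 → E} (hx : Function.Injective x)
    (hz : Function.Injective z) (hxz : ∀ i j, x i ≠ z j) :
    Function.Injective (subst j1 j2 x z) := by
  intro i i' h
  by_cases hi : i ∈ Set.range j2 <;> by_cases hi' : i' ∈ Set.range j2
  · obtain ⟨s, rfl⟩ := hi
    obtain ⟨s', rfl⟩ := hi'
    rw [subst_apply_embedding, subst_apply_embedding] at h
    rw [j1.injective (hx h)]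
  · obtain ⟨s, rfl⟩ := hi
    rw [subst_apply_embedding, subst_apply_of_notMem_range _ _ _ _ hi'] at h
    exact absurd h (hxz _ _)
  · obtain ⟨s', rfl⟩ := hi'
    rw [subst_apply_embedding, subst_apply_of_notMem_range _ _ _ _ hi] at h
    exact absurd h.symm (hxz _ _)
  · rw [subst_apply_of_notMem_range _ _ _ _ hi, subst_apply_of_notMem_range _ _ _ _ hi'] at h
    exact hz h

lemma subst_inl_inr_injective : Function.Injective (subst j1 j2 Sum.inl Sum.inr) :=
  subst_injective j1 j2 Sum.inl_injective Sum.inr_injective fun _ _ => Sum.inl_ne_inr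

lemma exists_inl_notMem_range_subst (hl : l < k1) :
    ∃ i : Fin k1, Sum.inl i ∉ Set.range (subst j1 j2 Sum.inl Sum.inr) := by
  obtain ⟨i, hi⟩ : ∃ i, i ∉ Set.range j1 :=
    exists_notMem_range_of_card_lt j1 (by simpa only [Fintype.card_fin] using hl)
  refine ⟨i, ?_⟩
  rintro ⟨j, hj⟩
  by_cases hj2 : j ∈ Set.range j2
  · obtain ⟨s, rfl⟩ := hj2
    rw [subst_apply_embedding] at hj
    exact hi ⟨s, Sum.inl_injective hj⟩
  · rw [subst_apply_of_notMem_range _ _ _ _ hj2] at hj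
    exact Sum.inr_ne_inl hj

lemma exists_subst_notMem_range_inl (hl : l < k2) :
    ∃ i : Fin k2, subst j1 j2 Sum.inl Sum.inr i ∉
      Set.range (Sum.inl : Fin k1 → Fin k1 ⊕ Fin k2) := by
  obtain ⟨i, hi⟩ : ∃ i, i ∉ Set.range j2 :=
    exists_notMem_range_of_card_lt j2 (by simpa only [Fintype.card_fin] using hl)
  refine ⟨i, ?_⟩
  rw [subst_apply_of_notMem_range _ _ _ _ hi]
  exact fun ⟨_, hinl⟩ => Sum.inl_ne_inr hinl

variable [MeasurableSpace E]

lemma enorm_mul_integral_subst_le (P : Measure E) [SigmaFinite P] (c : ℝ) (f : (Fin k1 → E) → ℝ)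
    (g : (Fin k2 → E) → ℝ) :
    ‖√c ^ (k1 + k2) * ∫ q : (Fin k1 → E) × (Fin k2 → E), f q.1 * g (subst j1 j2 q.1 q.2)
        ∂((Measure.pi fun _ => P).prod (Measure.pi fun _ => P))‖ₑ ≤
      scaledPairing (ENNReal.ofReal √c) P Sum.inl (subst j1 j2 Sum.inl Sum.inr) f g := by
  have hpull : ∫ q : (Fin k1 → E) × (Fin k2 → E), f q.1 * g (subst j1 j2 q.1 q.2)
        ∂((Measure.pi fun _ => P).prod (Measure.pi fun _ => P)) =
      ∫ w : Fin k1 ⊕ Fin k2 → E, f (w ∘ Sum.inl) * g (w ∘ subst j1 j2 Sum.inl Sum.inr)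
        ∂(Measure.pi fun _ => P) := by
    rw [← (measurePreserving_sumPiEquivProdPi fun _ : Fin k1 ⊕ Fin k2 => P).integral_comp']
    simp only [← subst_comp]
    rfl
  rw [hpull, enorm_mul, enorm_pow, Real.enorm_of_nonneg (Real.sqrt_nonneg c), scaledPairing,
    Fintype.card_fin, Fintype.card_fin, eLpNorm_one_eq_lintegral_enorm]
  exact mul_le_mul_right (enorm_integral_le_lintegral_enorm _) _

lemma tendsto_mul_integral_subst_zero {α : Type*} {F : Filter α} {μ : Measure E} [SigmaFinite μ]
    {c : α → ℝ} {P : α → Measure E} [∀ n, IsProbabilityMeasure (P n)] (hc : Tendsto c F atTop)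
    (hP : ∀ᶠ n in F, ENNReal.ofReal (c n) • P n ≤ μ) (hl : l < k1 ∨ l < k2)
    {f : (Fin k1 → E) → ℝ} {g : (Fin k2 → E) → ℝ}
    (hf : MemLp f 2 (Measure.pi fun _ => μ)) (hg : MemLp g 2 (Measure.pi fun _ => μ)) :
    Tendsto (fun n => √(c n) ^ (k1 + k2) *
      ∫ q : (Fin k1 → E) × (Fin k2 → E), f q.1 * g (subst j1 j2 q.1 q.2)
        ∂((Measure.pi fun _ => P n).prod (Measure.pi fun _ => P n))) F (𝓝 0) := by
  have hD : Tendsto (fun n => ENNReal.ofReal √(c n)) F (𝓝 ∞) :=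
    ENNReal.tendsto_ofReal_nhds_top.2 (Real.tendsto_sqrt_atTop.comp hc)
  have hPD : ∀ᶠ n in F, ENNReal.ofReal √(c n) ^ 2 • P n ≤ μ := by
    filter_upwards [hP, hc.eventually_ge_atTop 0] with n hPn hcn
    rwa [← ENNReal.ofReal_pow (Real.sqrt_nonneg _), Real.sq_sqrt hcn]
  have hτ := subst_inl_inr_injective j1 j2
  have hpairing : Tendsto (fun n => scaledPairing (ENNReal.ofReal √(c n)) (P n) Sum.inl
      (subst j1 j2 Sum.inl Sum.inr) f g) F (𝓝 0) := by
    rcases hl with hl1 | hl2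
    · obtain ⟨i, hi⟩ := exists_inl_notMem_range_subst j1 j2 hl1
      exact tendsto_scaledPairing_zero hD hPD Sum.inl_injective hτ hi hf hg
    · obtain ⟨i, hi⟩ := exists_subst_notMem_range_inl j1 j2 hl2
      simp only [scaledPairing_comm _ _ Sum.inl]
      exact tendsto_scaledPairing_zero hD hPD hτ Sum.inl_injective hi hg hf
  refine tendsto_zero_iff_enorm_tendsto_zero.2 ?_
  exact tendsto_of_tendsto_of_tendsto_of_le_of_le tendsto_const_nhds hpairing
    (fun _ => zero_le) fun n => enorm_mul_integral_subst_le j1 j2 (P n) (c n) f g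

end Diagrams

namespace Assumption21

variable {E : Type*} [MeasurableSpace E] {μ : Measure E} {a : ℕ → ℝ} {P : ℕ → Measure E}

lemma tendsto_div_atTop (h : Assumption21 μ a P) :
    Tendsto (fun n : ℕ => (n : ℝ) / a n) atTop atTop := by
  obtain ⟨-, ha_pos, -, ha_lim, -, -⟩ := h
  have ha_lim_pos : Tendsto (fun n : ℕ => a n / n) atTop (𝓝[>] 0) := by
    refine tendsto_nhdsWithin_iff.2 ⟨ha_lim, ?_⟩
    filter_upwards [eventually_ge_atTop 1] with n hn
    exact div_pos (ha_pos n hn) (by exact_mod_cast hn)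
  exact ha_lim_pos.inv_tendsto_nhdsGT_zero.congr fun n => inv_div _ _

lemma smul_le (h : Assumption21 μ a P) {n : ℕ} (hn : 1 ≤ n) :
    ENNReal.ofReal ((n : ℝ) / a n) • P n ≤ μ := by
  obtain ⟨-, -, -, -, hmono, hlim⟩ := h
  refine Measure.le_iff.2 fun B hB => ge_of_tendsto (hlim B hB) ?_
  filter_upwards [eventually_ge_atTop n] with m hm
  induction m, hm using Nat.le_induction with
  | base => rfl
  | succ m hnm ih => exact_mod_cast ih.trans (hmono B hB m (hn.trans hnm))

end Assumption21

theorem Fln_tendsto_zero_general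
    {E α : Type*} [MeasurableSpace E] {μ : Measure E} [SigmaFinite μ] {F : Filter α}
    {c : α → ℝ} {P : α → Measure E} [∀ n, IsProbabilityMeasure (P n)]
    (hc : Tendsto c F atTop) (hP : ∀ᶠ n in F, ENNReal.ofReal (c n) • P n ≤ μ)
    {k1 k2 l : ℕ} {f : (Fin k1 → E) → ℝ} {g : (Fin k2 → E) → ℝ}
    (hf : MemLp f 2 (Measure.pi fun _ : Fin k1 => μ))
    (hg : MemLp g 2 (Measure.pi fun _ : Fin k2 => μ))
    (hcase : (k1 ≠ k2 ∧ l ≤ min k1 k2) ∨ (k1 = k2 ∧ l < k1)) :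
    Tendsto (fun n => Fln (P n) (c n) k1 k2 l f g) F (𝓝 0) := by
  have hl : l < k1 ∨ l < k2 := by omega
  have hsum := (tendsto_finsetSum Finset.univ fun (j1 : Fin l ↪ Fin k1) _ =>
    tendsto_finsetSum Finset.univ fun (j2 : Fin l ↪ Fin k2) _ =>
      tendsto_mul_integral_subst_zero j1 j2 hc hP hl hf hg).const_mul
    ((Fintype.card (Fin l ↪ Fin k1) * Fintype.card (Fin l ↪ Fin k2) : ℕ) : ℝ)⁻¹
  simp only [Finset.sum_const_zero, mul_zero, ← Finset.mul_sum] at hsum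
  refine hsum.congr fun n => ?_
  rw [Fln, mul_assoc, mul_left_comm]

/-- Under Assumption 2.1, if either `k1 ≠ k2` and `0 ≤ l ≤ min k1 k2`, or
`k1 = k2` and `0 ≤ l < k1`, then `F_l^{(n)}(f, g) → 0` as `n → ∞`. -/
theorem Fln_tendsto_zero
    {E : Type*} [MeasurableSpace E] (μ : Measure E) [SigmaFinite μ] [NullSingletonClass μ]
    (a : ℕ → ℝ) (P : ℕ → Measure E) [∀ n, IsProbabilityMeasure (P n)]
    (h21 : Assumption21 μ a P)
    (k1 k2 l : ℕ) (hk1 : 1 ≤ k1) (hk2 : 1 ≤ k2)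
    (f : (Fin k1 → E) → ℝ) (g : (Fin k2 → E) → ℝ)
    (hf : MemLp f 2 (Measure.pi fun _ : Fin k1 => μ))
    (hg : MemLp g 2 (Measure.pi fun _ : Fin k2 => μ))
    (hcase : (k1 ≠ k2 ∧ l ≤ min k1 k2) ∨ (k1 = k2 ∧ l < k1)) :
    Tendsto (fun n : ℕ => Fln (P n) ((n : ℝ) / a n) k1 k2 l f g) atTop (𝓝 0) := by
  exact Fln_tendsto_zero_general h21.tendsto_div_atTop
    (eventually_atTop.2 ⟨1, fun _ => h21.smul_le⟩) hf hg hcase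
end
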